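/- arXiv:2305.13151 — 5 statements merged into one kernel-verified Lean document; each statement's English description precedes it below -/
import Mathlib

section
/- For all integers m ≥ 1 and n ≥ 1, p^{od}_{ed}(m,n) - p^{od}_{ed}(m,n-1) = D_o(m,n) - D_e(m,n-1) (an identity of integers). -/
/-- Number of partitions of `n` into exactly `m` distinct parts in which
every even part is smaller than every odd part. -/
noncomputable def podEd (m n : ℕ) : ℕ :=
  Nat.card {π : n.Partition // π.parts.Nodup ∧ Multiset.card π.parts = m ∧
    ∀ a ∈ π.parts, ∀ b ∈ π.parts, Even a → Odd b → a < b}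

/-- Number of partitions of `n` into exactly `m` distinct odd parts. -/
noncomputable def Dodd (m n : ℕ) : ℕ :=
  Nat.card {π : n.Partition // π.parts.Nodup ∧ Multiset.card π.parts = m ∧
    ∀ a ∈ π.parts, Odd a}

/-- Number of partitions of `n` into exactly `m` distinct even parts. -/
noncomputable def Deven (m n : ℕ) : ℕ :=
  Nat.card {π : n.Partition // π.parts.Nodup ∧ Multiset.card π.parts = m ∧
    ∀ a ∈ π.parts, Even a}

open Classical in
/-- Finsets of positive integers with `m` elements and sum `n`. -/
noncomputable def parA (m n : ℕ) : Finset (Finset ℕ) :=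
  (Finset.range (n + 1)).powerset.filter (fun s => 0 ∉ s ∧ s.sum id = n ∧ s.card = m)

lemma mem_parA {m n : ℕ} {s : Finset ℕ} :
    s ∈ parA m n ↔ 0 ∉ s ∧ s.sum id = n ∧ s.card = m := by
  classical
  unfold parA
  rw [Finset.mem_filter, Finset.mem_powerset]
  constructor
  · exact fun h => h.2
  · intro h
    refine ⟨?_, h⟩
    intro x hx
    have := Finset.single_le_sum (f := id) (fun i _ => Nat.zero_le _) hx
    simp only [id] at this
    have h2 := h.2.1
    simp only [id] at h2
    rw [Finset.mem_range]
    omega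

open Classical in
lemma card_par (m n : ℕ) (P : Multiset ℕ → Prop) :
    Nat.card {π : n.Partition // π.parts.Nodup ∧ Multiset.card π.parts = m ∧ P π.parts}
      = ((parA m n).filter (fun s => P s.val)).card := by
  rw [← Fintype.card_coe, ← Nat.card_eq_fintype_card]
  refine Nat.card_congr
    { toFun := fun π => ⟨⟨π.1.parts, π.2.1⟩, ?_⟩
      invFun := fun s => ⟨⟨s.1.val, ?_, ?_⟩, ?_⟩
      left_inv := ?_
      right_inv := ?_ }
  · rw [Finset.mem_filter, mem_parA]
    refine ⟨⟨?_, ?_, π.2.2.1⟩, π.2.2.2⟩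
    · intro h
      exact absurd (π.1.parts_pos h) (by simp)
    · simpa [Finset.sum] using π.1.parts_sum
  · intro i hi
    have := s.2
    rw [Finset.mem_filter, mem_parA] at this
    refine Nat.pos_of_ne_zero ?_
    rintro rfl
    exact this.1.1 hi
  · have := s.2
    rw [Finset.mem_filter, mem_parA] at this
    have h := this.1.2.1
    rw [Finset.sum, Multiset.map_id] at h
    exact h
  · have := s.2
    rw [Finset.mem_filter, mem_parA] at this
    exact ⟨s.1.nodup, this.1.2.2, this.2⟩
  · intro π
    rfl
  · intro s
    rfl

/-- Largest even element. -/
def maxE (s : Finset ℕ) : ℕ := (s.filter Even).sup id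
/-- Smallest odd element. -/
noncomputable def minO (s : Finset ℕ) : ℕ := sInf {x | x ∈ s ∧ Odd x}

lemma maxE_eq {s : Finset ℕ} {a : ℕ} (ha : a ∈ s) (he : Even a)
    (h : ∀ b ∈ s, Even b → b ≤ a) : maxE s = a := by
  apply le_antisymm
  · apply Finset.sup_le
    intro b hb
    rw [Finset.mem_filter] at hb
    exact h b hb.1 hb.2
  · exact Finset.le_sup (f := id) (Finset.mem_filter.2 ⟨ha, he⟩)

lemma maxE_spec {s : Finset ℕ} (h : ∃ a ∈ s, Even a) :
    maxE s ∈ s ∧ Even (maxE s) ∧ ∀ b ∈ s, Even b → b ≤ maxE s := by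
  obtain ⟨a, ha, hae⟩ := h
  obtain ⟨c, hc, hm⟩ := Finset.exists_max_image (s.filter Even) id
    ⟨a, Finset.mem_filter.2 ⟨ha, hae⟩⟩
  rw [Finset.mem_filter] at hc
  have hm' : ∀ b ∈ s, Even b → b ≤ c := fun b hb he => hm b (Finset.mem_filter.2 ⟨hb, he⟩)
  rw [maxE_eq hc.1 hc.2 hm']
  exact ⟨hc.1, hc.2, hm'⟩

lemma minO_eq {s : Finset ℕ} {a : ℕ} (ha : a ∈ s) (he : Odd a)
    (h : ∀ b ∈ s, Odd b → a ≤ b) : minO s = a := by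
  apply le_antisymm
  · exact Nat.sInf_le ⟨ha, he⟩
  · have := Nat.sInf_mem (s := {x | x ∈ s ∧ Odd x}) ⟨a, ha, he⟩
    exact h _ this.1 this.2

lemma minO_spec {s : Finset ℕ} (h : ∃ a ∈ s, Odd a) :
    minO s ∈ s ∧ Odd (minO s) ∧ ∀ b ∈ s, Odd b → minO s ≤ b := by
  obtain ⟨a, ha, hae⟩ := h
  have := Nat.sInf_mem (s := {x | x ∈ s ∧ Odd x}) ⟨a, ha, hae⟩
  exact ⟨this.1, this.2, fun b hb ho => Nat.sInf_le ⟨hb, ho⟩⟩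

/-- Every even element is below every odd element. -/
def Good (s : Finset ℕ) : Prop := ∀ a ∈ s, ∀ b ∈ s, Even a → Odd b → a < b

lemma sum_swap {s : Finset ℕ} {a c : ℕ} (ha : a ∈ s) (hc : c ∉ s) :
    (insert c (s.erase a)).sum id + a = s.sum id + c ∧
    (insert c (s.erase a)).card = s.card := by
  have hc' : c ∉ s.erase a := fun h => hc (Finset.mem_of_mem_erase h)
  rw [Finset.sum_insert hc', Finset.card_insert_of_notMem hc', Finset.card_erase_add_one ha,
    ← Finset.add_sum_erase s id ha]
  simp only [id]
  exact ⟨by ring, trivial⟩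

lemma swap_swap {s : Finset ℕ} {a c : ℕ} (ha : a ∈ s) (hc : c ∉ s) :
    insert a ((insert c (s.erase a)).erase c) = s := by
  have hc' : c ∉ s.erase a := fun h => hc (Finset.mem_of_mem_erase h)
  rw [Finset.erase_insert hc', Finset.insert_erase ha]

/-- forward map data -/
lemma fwd {s : Finset ℕ} (h0 : 0 ∉ s) (hg : Good s) (he : ∃ a ∈ s, Even a) :
    ∃ a, maxE s = a + 1 ∧ a + 1 ∈ s ∧ a ∉ s ∧ Good (insert a (s.erase (a + 1))) ∧ Odd a ∧
      minO (insert a (s.erase (a + 1))) = a := by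
  obtain ⟨h1, h2, h3⟩ := maxE_spec he
  generalize maxE s = c at *
  obtain _ | a := c
  · exact absurd h1 h0
  have ho : Odd a := by grind
  have hna : a ∉ s := fun h => by have := hg _ h1 _ h h2 ho; omega
  have hbig : ∀ b ∈ s, Odd b → a + 1 < b := fun b hb hbo => hg _ h1 b hb h2 hbo
  refine ⟨a, rfl, h1, hna, ?_, ho, ?_⟩
  · intro x hx y hy hxe hyo
    simp only [Finset.mem_insert, Finset.mem_erase] at hx hy
    have hxs : x ∈ s ∧ x ≠ a + 1 := by
      rcases hx with rfl | hx
      · exact absurd hxe (Nat.not_even_iff_odd.2 ho)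
      · exact ⟨hx.2, hx.1⟩
    have := h3 x hxs.1 hxe
    have hxa : x ≠ a := fun h => hna (h ▸ hxs.1)
    rcases hy with rfl | hy
    · omega
    · exact hg _ hxs.1 _ hy.2 hxe hyo
  · apply minO_eq (Finset.mem_insert_self _ _) ho
    intro b hb hbo
    simp only [Finset.mem_insert, Finset.mem_erase] at hb
    rcases hb with rfl | hb
    · exact le_rfl
    · have := hbig b hb.2 hbo
      omega

/-- backward map data -/
lemma bwd {s : Finset ℕ} (hg : Good s) (he : ∃ a ∈ s, Odd a) :
    ∃ a, minO s = a ∧ a ∈ s ∧ a + 1 ∉ s ∧ Good (insert (a + 1) (s.erase a)) ∧ Even (a + 1) ∧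
      maxE (insert (a + 1) (s.erase a)) = a + 1 := by
  obtain ⟨h1, h2, h3⟩ := minO_spec he
  generalize minO s = a at *
  have ho : Even (a + 1) := by grind
  have hna : a + 1 ∉ s := fun h => by have := hg _ h _ h1 ho h2; omega
  have hsm : ∀ b ∈ s, Even b → b < a := fun b hb hbe => hg b hb _ h1 hbe h2
  refine ⟨a, rfl, h1, hna, ?_, ho, ?_⟩
  · intro x hx y hy hxe hyo
    simp only [Finset.mem_insert, Finset.mem_erase] at hx hy
    have hys : y ∈ s ∧ y ≠ a := by
      rcases hy with rfl | hy
      · exact absurd ho (Nat.not_even_iff_odd.2 hyo)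
      · exact ⟨hy.2, hy.1⟩
    have := h3 y hys.1 hyo
    have hya : y ≠ a + 1 := fun h => hna (h ▸ hys.1)
    rcases hx with rfl | hx
    · omega
    · exact hg _ hx.2 _ hys.1 hxe hyo
  · apply maxE_eq (Finset.mem_insert_self _ _) ho
    intro b hb hbo
    simp only [Finset.mem_insert, Finset.mem_erase] at hb
    rcases hb with rfl | hb
    · exact le_rfl
    · have := hsm b hb.2 hbo
      omega

/-- All elements are odd. -/
def AllOdd (s : Finset ℕ) : Prop := ∀ a ∈ s, Odd a
/-- All elements are even. -/
def AllEven (s : Finset ℕ) : Prop := ∀ a ∈ s, Even a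
/-- Some element is even. -/
def HasEven (s : Finset ℕ) : Prop := ∃ a ∈ s, Even a
/-- Some element is odd. -/
def HasOdd (s : Finset ℕ) : Prop := ∃ a ∈ s, Odd a

open Classical in
lemma card_key (m n : ℕ) :
    ((parA m (n + 1)).filter (fun s => Good s ∧ HasEven s)).card
      = ((parA m n).filter (fun s => Good s ∧ HasOdd s)).card := by
  refine Finset.card_nbij' (fun s => insert (maxE s - 1) (s.erase (maxE s)))
    (fun s => insert (minO s + 1) (s.erase (minO s))) ?_ ?_ ?_ ?_
  · intro s hs
    rw [Finset.mem_coe, Finset.mem_filter, mem_parA] at hs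
    obtain ⟨⟨h0, h1, h2⟩, hg, he⟩ := hs
    obtain ⟨a, e1, e2, e3, e4, e5, e6⟩ := fwd h0 hg he
    obtain ⟨s1, s2⟩ := sum_swap e2 e3
    simp only [e1, Nat.add_sub_cancel]
    rw [Finset.mem_coe, Finset.mem_filter, mem_parA]
    refine ⟨⟨?_, by omega, by omega⟩, e4, a, Finset.mem_insert_self _ _, e5⟩
    intro h
    simp only [Finset.mem_insert, Finset.mem_erase] at h
    rcases h with rfl | h
    · simp at e5
    · exact h0 h.2
  · intro s hs
    rw [Finset.mem_coe, Finset.mem_filter, mem_parA] at hs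
    obtain ⟨⟨h0, h1, h2⟩, hg, he⟩ := hs
    obtain ⟨a, e1, e2, e3, e4, e5, e6⟩ := bwd hg he
    obtain ⟨s1, s2⟩ := sum_swap e2 e3
    simp only [e1]
    rw [Finset.mem_coe, Finset.mem_filter, mem_parA]
    refine ⟨⟨?_, by omega, by omega⟩, e4, a + 1, Finset.mem_insert_self _ _, e5⟩
    intro h
    simp only [Finset.mem_insert, Finset.mem_erase] at h
    rcases h with h | h
    · omega
    · exact h0 h.2
  · intro s hs
    rw [Finset.mem_coe, Finset.mem_filter, mem_parA] at hs
    obtain ⟨⟨h0, h1, h2⟩, hg, he⟩ := hs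
    obtain ⟨a, e1, e2, e3, e4, e5, e6⟩ := fwd h0 hg he
    simp only [e1, Nat.add_sub_cancel, e6]
    exact swap_swap e2 e3
  · intro s hs
    rw [Finset.mem_coe, Finset.mem_filter, mem_parA] at hs
    obtain ⟨⟨h0, h1, h2⟩, hg, he⟩ := hs
    obtain ⟨a, e1, e2, e3, e4, e5, e6⟩ := bwd hg he
    simp only [e1, e6, Nat.add_sub_cancel]
    exact swap_swap e2 e3

open Classical in
lemma card_split (A : Finset (Finset ℕ)) (Q R : Finset ℕ → Prop)
    (h : ∀ s, R s → Good s) (hq : ∀ s, Q s ↔ ¬ R s) :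
    (A.filter Good).card = (A.filter R).card + (A.filter (fun s => Good s ∧ Q s)).card := by
  rw [← Finset.card_filter_add_card_filter_not (s := A.filter Good) R, Finset.filter_filter,
    Finset.filter_filter]
  congr 2
  · ext s
    simp only [Finset.mem_filter]
    have := h s
    tauto
  · ext s
    simp only [Finset.mem_filter, hq]

theorem podEd_diff (m n : ℕ) (hm : 1 ≤ m) (hn : 1 ≤ n) :
    (podEd m n : ℤ) - (podEd m (n - 1) : ℤ)
      = (Dodd m n : ℤ) - (Deven m (n - 1) : ℤ) := by
  classical
  obtain ⟨k, rfl⟩ : ∃ k, n = k + 1 := ⟨n - 1, by omega⟩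
  rw [Nat.add_sub_cancel]
  have hp : ∀ j, podEd m j = ((parA m j).filter Good).card := fun j =>
    card_par m j (fun M => ∀ a ∈ M, ∀ b ∈ M, Even a → Odd b → a < b)
  have ho : Dodd m (k + 1) = ((parA m (k + 1)).filter AllOdd).card :=
    card_par m (k + 1) (fun M => ∀ a ∈ M, Odd a)
  have he : Deven m k = ((parA m k).filter AllEven).card :=
    card_par m k (fun M => ∀ a ∈ M, Even a)
  have h1 := card_split (parA m (k + 1)) HasEven AllOdd
    (fun s h a ha b _ hae _ => absurd hae (Nat.not_even_iff_odd.2 (h a ha)))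
    (fun s => by unfold HasEven AllOdd; push Not; simp only [Nat.not_odd_iff_even])
  have h2 := card_split (parA m k) HasOdd AllEven
    (fun s h a _ b hb _ hbo => absurd (h b hb) (Nat.not_even_iff_odd.2 hbo))
    (fun s => by unfold HasOdd AllEven; push Not; simp only [Nat.not_even_iff_odd])
  have h3 := card_key m k
  rw [hp, hp, ho, he]
  omega
end

section
/- For all integers m ≥ 1 and n ≥ 1, p^{od}_{ed}(m,2n) - p^{od}_{ed}(m,2n-1) = D_o(m,2n). -/
/-- Counting partitions with distinct parts as finsets. -/
theorem card_partition_aux (N : ℕ) (P : Multiset ℕ → Prop) :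
    Nat.card {π : N.Partition // π.parts.Nodup ∧ P π.parts} =
      Set.ncard {s : Finset ℕ | 0 ∉ s ∧ ∑ x ∈ s, x = N ∧ P s.val} := by
  rw [← Nat.card_coe_set_eq]
  refine Nat.card_congr
    { toFun := fun π => ⟨⟨π.1.parts, π.2.1⟩, ?_, ?_, π.2.2⟩
      invFun := fun s => ⟨⟨s.1.val, ?_, ?_⟩, s.1.nodup, s.2.2.2⟩
      left_inv := ?_
      right_inv := ?_ }
  · intro h
    exact absurd (π.1.parts_pos h) (lt_irrefl 0)
  · have := π.1.parts_sum
    simpa [Finset.sum] using this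
  · intro i hi
    rcases Nat.eq_zero_or_pos i with h | h
    · subst h
      exact absurd hi s.2.1
    · exact h
  · have h := s.2.2.1
    rw [Finset.sum, Multiset.map_id'] at h
    exact h
  · intro π
    rfl
  · intro s
    rfl

/-- Finsets in which every even element is smaller than every odd element. -/
def EvLtOd (s : Finset ℕ) : Prop := ∀ a ∈ s, ∀ b ∈ s, Even a → Odd b → a < b

theorem finite_aux (N : ℕ) (Q : Finset ℕ → Prop) :
    {s : Finset ℕ | 0 ∉ s ∧ ∑ x ∈ s, x = N ∧ Q s}.Finite := by
  refine (Finset.finite_toSet (Finset.range (N + 1)).powerset).subset ?_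
  rintro s ⟨_, h, _⟩
  simp only [Finset.coe_powerset, Set.mem_preimage, Set.mem_powerset_iff, Finset.coe_subset]
  intro x hx
  have := Finset.single_le_sum (f := fun x => x) (fun i _ => Nat.zero_le i) hx
  simp only [Finset.mem_range]
  omega

/-- Largest even element. -/
def mxE (s : Finset ℕ) : ℕ := (s.filter Even).sup id

theorem mxE_spec (s : Finset ℕ) (h : ∃ a ∈ s, Even a) :
    mxE s ∈ s ∧ Even (mxE s) ∧ ∀ a ∈ s, Even a → a ≤ mxE s := by
  obtain ⟨a, ha, he⟩ := h
  have hne : (s.filter Even).Nonempty := ⟨a, by simp [ha, he]⟩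
  obtain ⟨b, hb, hb'⟩ := Finset.exists_mem_eq_sup _ hne id
  have hb2 : mxE s = b := hb'
  rw [Finset.mem_filter] at hb
  refine ⟨hb2 ▸ hb.1, hb2 ▸ hb.2, fun c hc hce => ?_⟩
  exact Finset.le_sup (f := id) (Finset.mem_filter.2 ⟨hc, hce⟩)

theorem bij_aux (m n : ℕ) (hn : 1 ≤ n) :
    Set.ncard {s : Finset ℕ | 0 ∉ s ∧ ∑ x ∈ s, x = 2 * n ∧
      (s.card = m ∧ EvLtOd s ∧ ∃ a ∈ s, Even a)} =
    Set.ncard {s : Finset ℕ | 0 ∉ s ∧ ∑ x ∈ s, x = 2 * n - 1 ∧ (s.card = m ∧ EvLtOd s)} := by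
  refine Set.ncard_congr (fun s _ => insert (mxE s - 1) (s.erase (mxE s))) ?_ ?_ ?_
  · rintro s ⟨h0, hs, hc, hE, hex⟩
    obtain ⟨h1, h2, h3⟩ := mxE_spec s hex
    set M := mxE s
    have hM0 : M ≠ 0 := fun h => h0 (h ▸ h1)
    obtain ⟨k, hk⟩ := h2
    have hnot : M - 1 ∉ s := fun h => by
      have := hE M h1 (M - 1) h ⟨k, hk⟩ ⟨k - 1, by omega⟩
      omega
    have hnot2 : M - 1 ∉ s.erase M := fun h => hnot (Finset.mem_of_mem_erase h)
    refine ⟨?_, ?_, ?_, ?_⟩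
    · simp only [Finset.mem_insert, Finset.mem_erase]
      rintro (h | h)
      · omega
      · exact h0 h.2
    · rw [Finset.sum_insert hnot2]
      have := Finset.add_sum_erase s (fun x => x) h1
      omega
    · rw [Finset.card_insert_of_notMem hnot2, Finset.card_erase_of_mem h1]
      have := Finset.card_pos.2 ⟨M, h1⟩
      omega
    · intro a ha b hb hae hbo
      simp only [Finset.mem_insert, Finset.mem_erase] at ha hb
      rcases ha with ha | ha
      · obtain ⟨j, hj⟩ := hae
        omega
      · rcases hb with hb | hb
        · have := h3 a ha.2 hae
          obtain ⟨j, hj⟩ := hae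
          omega
        · exact hE a ha.2 b hb.2 hae hbo
  · have key : ∀ s t : Finset ℕ, 0 ∉ s → EvLtOd s → (∃ a ∈ s, Even a) → 0 ∉ t → EvLtOd t →
        (∃ a ∈ t, Even a) → insert (mxE s - 1) (s.erase (mxE s)) =
          insert (mxE t - 1) (t.erase (mxE t)) → mxE s ≤ mxE t := by
      intro s t s0 sE sx t0 tE tx h
      obtain ⟨h1, h2, h3⟩ := mxE_spec s sx
      obtain ⟨g1, g2, g3⟩ := mxE_spec t tx
      have hM0 : mxE s ≠ 0 := fun h => s0 (h ▸ h1)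
      have hN0 : mxE t ≠ 0 := fun h => t0 (h ▸ g1)
      have hm : mxE t - 1 ∈ insert (mxE s - 1) (s.erase (mxE s)) := by
        rw [h]; exact Finset.mem_insert_self _ _
      simp only [Finset.mem_insert, Finset.mem_erase] at hm
      rcases hm with hm | hm
      · omega
      · obtain ⟨j, hj⟩ := id g2
        have := sE _ h1 _ hm.2 h2 ⟨j - 1, by omega⟩
        omega
    have back : ∀ s : Finset ℕ, 0 ∉ s → EvLtOd s → (∃ a ∈ s, Even a) →
        insert (mxE s) ((insert (mxE s - 1) (s.erase (mxE s))).erase (mxE s - 1)) = s := by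
      intro s s0 sE sx
      obtain ⟨h1, h2, h3⟩ := mxE_spec s sx
      have hM0 : mxE s ≠ 0 := fun h => s0 (h ▸ h1)
      obtain ⟨k, hk⟩ := id h2
      have hnot : mxE s - 1 ∉ s.erase (mxE s) := fun h => by
        have := sE _ h1 _ (Finset.mem_of_mem_erase h) h2 ⟨k - 1, by omega⟩
        omega
      rw [Finset.erase_insert hnot, Finset.insert_erase h1]
    rintro s t ⟨s0, _, _, sE, sx⟩ ⟨t0, _, _, tE, tx⟩ h
    have hM := le_antisymm (key s t s0 sE sx t0 tE tx h) (key t s t0 tE tx s0 sE sx h.symm)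
    rw [← back s s0 sE sx, ← back t t0 tE tx, h, hM]
  · rintro t ⟨t0, ts, tc, tE⟩
    have hx : ∃ b, b ∈ t ∧ Odd b := by
      by_contra hcon
      push Not at hcon
      have : Even (∑ x ∈ t, x) := Finset.even_sum _ (fun i hi => by
        simpa using hcon i hi)
      obtain ⟨k, hk⟩ := this
      omega
    classical
    obtain ⟨hb, hbo⟩ := Nat.find_spec hx
    have hmin : ∀ c ∈ t, Odd c → Nat.find hx ≤ c := fun c hc ho => Nat.find_min' hx ⟨hc, ho⟩
    generalize Nat.find hx = b at hb hbo hmin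
    obtain ⟨k, hk⟩ := id hbo
    have hev : Even (b + 1) := ⟨k + 1, by omega⟩
    have hnot : b + 1 ∉ t := fun h => by
      have := tE _ h _ hb hev hbo
      omega
    have hnot2 : b + 1 ∉ t.erase b := fun h => hnot (Finset.mem_of_mem_erase h)
    have hx2 : ∃ a ∈ insert (b + 1) (t.erase b), Even a :=
      ⟨b + 1, Finset.mem_insert_self _ _, hev⟩
    have hle : ∀ a ∈ insert (b + 1) (t.erase b), Even a → a ≤ b + 1 := by
      intro a ha hae
      simp only [Finset.mem_insert, Finset.mem_erase] at ha
      rcases ha with ha | ha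
      · omega
      · have := tE a ha.2 b hb hae hbo
        omega
    have hmx : mxE (insert (b + 1) (t.erase b)) = b + 1 := by
      obtain ⟨h1, h2, h3⟩ := mxE_spec _ hx2
      exact le_antisymm (hle _ h1 h2) (h3 _ (Finset.mem_insert_self _ _) hev)
    refine ⟨insert (b + 1) (t.erase b), ⟨?_, ?_, ?_, ?_, hx2⟩, ?_⟩
    · simp only [Finset.mem_insert, Finset.mem_erase]
      rintro (h | h)
      · omega
      · exact t0 h.2
    · rw [Finset.sum_insert hnot2]
      have := Finset.add_sum_erase t (fun x => x) hb
      omega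
    · rw [Finset.card_insert_of_notMem hnot2, Finset.card_erase_of_mem hb]
      have := Finset.card_pos.2 ⟨b, hb⟩
      omega
    · intro a ha c hc hae hco
      have h1 := hle a ha hae
      simp only [Finset.mem_insert, Finset.mem_erase] at hc
      rcases hc with hc | hc
      · subst hc
        exact absurd hev (Nat.not_even_iff_odd.2 hco)
      · have := hmin c hc.2 hco
        obtain ⟨i, hi⟩ := hae
        obtain ⟨j, hj⟩ := hco
        have := hc.1
        omega
    · simp only [hmx]
      rw [Finset.erase_insert hnot2, Nat.add_sub_cancel, Finset.insert_erase hb]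

theorem podEd_even_diff (m n : ℕ) (hm : 1 ≤ m) (hn : 1 ≤ n) :
    (podEd m (2 * n) : ℤ) - (podEd m (2 * n - 1) : ℤ) = (Dodd m (2 * n) : ℤ) := by
  have hp : ∀ N, podEd m N =
      Set.ncard {s : Finset ℕ | 0 ∉ s ∧ ∑ x ∈ s, x = N ∧ (s.card = m ∧ EvLtOd s)} := fun N =>
    card_partition_aux N (fun p => Multiset.card p = m ∧
      ∀ a ∈ p, ∀ b ∈ p, Even a → Odd b → a < b)
  have hd : Dodd m (2 * n) = Set.ncard {s : Finset ℕ | 0 ∉ s ∧ ∑ x ∈ s, x = 2 * n ∧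
      (s.card = m ∧ ∀ a ∈ s, Odd a)} :=
    card_partition_aux (2 * n) (fun p => Multiset.card p = m ∧ ∀ a ∈ p, Odd a)
  have hu : {s : Finset ℕ | 0 ∉ s ∧ ∑ x ∈ s, x = 2 * n ∧ (s.card = m ∧ EvLtOd s)} =
      {s : Finset ℕ | 0 ∉ s ∧ ∑ x ∈ s, x = 2 * n ∧ (s.card = m ∧ ∀ a ∈ s, Odd a)} ∪
      {s : Finset ℕ | 0 ∉ s ∧ ∑ x ∈ s, x = 2 * n ∧
        (s.card = m ∧ EvLtOd s ∧ ∃ a ∈ s, Even a)} := by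
    ext s
    simp only [Set.mem_ofPred_eq, Set.mem_union]
    constructor
    · rintro ⟨h0, hs, hc, hE⟩
      by_cases h : ∃ a ∈ s, Even a
      · exact Or.inr ⟨h0, hs, hc, hE, h⟩
      · refine Or.inl ⟨h0, hs, hc, fun a ha => ?_⟩
        rw [← Nat.not_even_iff_odd]
        exact fun he => h ⟨a, ha, he⟩
    · rintro (⟨h0, hs, hc, ho⟩ | ⟨h0, hs, hc, hE, _⟩)
      · exact ⟨h0, hs, hc, fun a ha _ _ he _ =>
          absurd he (Nat.not_even_iff_odd.2 (ho a ha))⟩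
      · exact ⟨h0, hs, hc, hE⟩
  have hcard := Set.ncard_union_eq (s := {s : Finset ℕ | 0 ∉ s ∧ ∑ x ∈ s, x = 2 * n ∧
      (s.card = m ∧ ∀ a ∈ s, Odd a)}) (t := {s : Finset ℕ | 0 ∉ s ∧ ∑ x ∈ s, x = 2 * n ∧
        (s.card = m ∧ EvLtOd s ∧ ∃ a ∈ s, Even a)}) (by
      rw [Set.disjoint_left]
      rintro s ⟨_, _, _, ho⟩ ⟨_, _, _, _, a, ha, he⟩
      exact Nat.not_even_iff_odd.2 (ho a ha) he)
      (finite_aux _ _) (finite_aux _ _)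
  rw [← hu, bij_aux m n hn, ← hp, ← hp, ← hd] at hcard
  rw [hcard]
  push_cast
  ring
end

section
/- For all integers m ≥ 1 and n ≥ 1, p^{od}_{ed}(2m-1,2n) = p^{od}_{ed}(2m-1,2n-1). -/
/-- Finset form of the partitions counted by `podEd`. -/
def PodGood (m n : ℕ) (s : Finset ℕ) : Prop :=
  0 ∉ s ∧ s.card = m ∧ ∑ i ∈ s, i = n ∧ ∀ a ∈ s, ∀ b ∈ s, Even a → Odd b → a < b

/-- The common refinement: a set `u` with a distinguished odd number `b` separating
the even elements of `u` from the odd ones. -/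
def PodPair (m n : ℕ) (p : Finset ℕ × ℕ) : Prop :=
  0 ∉ p.1 ∧ p.1.card + 1 = m ∧ ∑ i ∈ p.1, i + p.2 = n ∧ Odd p.2 ∧
    (∀ a ∈ p.1, Even a → a < p.2) ∧ (∀ a ∈ p.1, Odd a → p.2 < a)

theorem podEd_eq_card (m n : ℕ) : podEd m n = Nat.card {s : Finset ℕ // PodGood m n s} := by
  unfold podEd
  refine Nat.card_congr
    { toFun := fun π => ⟨⟨π.1.parts, π.2.1⟩, ?_, π.2.2.1, ?_, π.2.2.2⟩
      invFun := fun s => ⟨⟨s.1.val, ?_, ?_⟩, s.1.nodup, s.2.2.1, s.2.2.2.2⟩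
      left_inv := fun π => rfl
      right_inv := fun s => rfl }
  · intro h
    exact absurd (π.1.parts_pos h) (lt_irrefl 0)
  · have := π.1.parts_sum
    simpa [Finset.sum] using this
  · intro i hi
    rcases Nat.eq_zero_or_pos i with h | h
    · subst h
      exact absurd hi s.2.1
    · exact h
  · have := s.2.2.2.1
    rw [Finset.sum, Multiset.map_id'] at this
    exact this

theorem PodPair.notMem {m n : ℕ} {p : Finset ℕ × ℕ} (h : PodPair m n p) : p.2 ∉ p.1 := by
  intro hb
  exact absurd (h.2.2.2.2.2 _ hb h.2.2.2.1) (lt_irrefl _)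

theorem PodPair.notMem_succ {m n : ℕ} {p : Finset ℕ × ℕ} (h : PodPair m n p) :
    p.2 + 1 ∉ p.1 := by
  intro hb
  have := h.2.2.2.2.1 _ hb h.2.2.2.1.add_one
  omega

theorem PodPair.good {m n : ℕ} {p : Finset ℕ × ℕ} (h : PodPair m n p) :
    PodGood m n (insert p.2 p.1) := by
  have hn := h.notMem
  obtain ⟨h0, hc, hs, ho, he, hod⟩ := h
  refine ⟨?_, ?_, ?_, ?_⟩
  · rw [Finset.mem_insert]
    rintro (h | h)
    · rw [← h] at ho; exact absurd ho (by decide)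
    · exact h0 h
  · rw [Finset.card_insert_of_notMem hn, hc]
  · rw [Finset.sum_insert hn]; omega
  · grind

theorem PodPair.good_succ {m n : ℕ} {p : Finset ℕ × ℕ} (h : PodPair m n p) :
    PodGood m (n + 1) (insert (p.2 + 1) p.1) := by
  have hn := h.notMem_succ
  obtain ⟨h0, hc, hs, ho, he, hod⟩ := h
  refine ⟨?_, ?_, ?_, ?_⟩
  · rw [Finset.mem_insert]
    rintro (h | h)
    · omega
    · exact h0 h
  · rw [Finset.card_insert_of_notMem hn, hc]
  · rw [Finset.sum_insert hn]; omega
  · intro x hx y hy hxe hyo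
    have hp : Even (p.2 + 1) := ho.add_one
    have key : ∀ z ∈ p.1, Odd z → p.2 + 1 < z := by
      intro z hz hzo
      have h1 := hod z hz hzo
      rcases ho with ⟨k, hk⟩
      rcases hzo with ⟨l, hl⟩
      omega
    rw [Finset.mem_insert] at hx hy
    rcases hy with rfl | hy
    · exact absurd hp (Nat.not_even_iff_odd.2 hyo)
    · have h2 := key y hy hyo
      rcases hx with rfl | hx
      · exact h2
      · have := he x hx hxe
        omega

/-- A set with odd sum has an odd element. -/
theorem exists_odd_of_sum {s : Finset ℕ} (h : Odd (∑ i ∈ s, i)) : ∃ b ∈ s, Odd b := by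
  by_contra hc
  push Not at hc
  exact Nat.not_even_iff_odd.2 h
    (Finset.even_sum _ fun i hi => Nat.not_odd_iff_even.1 (hc i hi))

theorem exists_even_of_sum {s : Finset ℕ} (h : Even (∑ i ∈ s, i)) (hc : Odd s.card) :
    ∃ b ∈ s, Even b := by
  by_contra hcon
  push Not at hcon
  have h2 : Odd (∑ i ∈ s, i) := by
    rw [Finset.odd_sum_iff_odd_card_odd, Finset.filter_true_of_mem]
    · exact hc
    · intro i hi
      exact Nat.not_even_iff_odd.1 (hcon i hi)
  exact Nat.not_even_iff_odd.2 h2 h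

theorem card_pair_odd (m n : ℕ) (hn : Odd n) :
    Nat.card {p // PodPair m n p} = Nat.card {s // PodGood m n s} := by
  refine Nat.card_eq_of_bijective (fun p => ⟨insert p.1.2 p.1.1, p.2.good⟩) ⟨?_, ?_⟩
  · rintro ⟨⟨u, b⟩, h⟩ ⟨⟨v, c⟩, k⟩ e
    have e : insert b u = insert c v := congrArg Subtype.val e
    have hb : b ∉ u := h.notMem
    have hc : c ∉ v := k.notMem
    have hbc : b = c := by
      have h1 : b ∈ insert c v := e ▸ Finset.mem_insert_self b u
      have h2 : c ∈ insert b u := e ▸ Finset.mem_insert_self c v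
      rw [Finset.mem_insert] at h1 h2
      rcases h1 with h1 | h1
      · exact h1
      rcases h2 with h2 | h2
      · exact h2.symm
      exact absurd (k.2.2.2.2.2 b h1 h.2.2.2.1) (h.2.2.2.2.2 c h2 k.2.2.2.1).le.not_gt
    subst hbc
    have huv : u = v := by
      rw [← Finset.erase_insert hb, e, Finset.erase_insert hc]
    subst huv
    rfl
  · rintro ⟨s, h0, hc, hs, hg⟩
    obtain ⟨b0, hb0, hb0o⟩ := exists_odd_of_sum (s := s) (by rwa [hs])
    have hne : (s.filter Odd).Nonempty := ⟨b0, by simp [hb0, hb0o]⟩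
    obtain ⟨b, hb, hmin⟩ := Finset.exists_min_image (s.filter Odd) id hne
    rw [Finset.mem_filter] at hb
    refine ⟨⟨(s.erase b, b), ?_, ?_, ?_, hb.2, ?_, ?_⟩, ?_⟩
    · intro h; exact h0 (Finset.mem_of_mem_erase h)
    · rw [← hc]; exact Finset.card_erase_add_one hb.1
    · rw [← hs]; exact Finset.sum_erase_add s (fun i => i) hb.1
    · intro a ha hae
      exact hg a (Finset.mem_of_mem_erase ha) b hb.1 hae hb.2
    · intro a ha hao
      have h1 : b ≤ a := hmin a (by simp [Finset.mem_of_mem_erase ha, hao])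
      exact lt_of_le_of_ne h1 (Finset.ne_of_mem_erase ha).symm
    · exact Subtype.ext (Finset.insert_erase hb.1)

theorem card_pair_even (m n : ℕ) (hn : Odd n) (hm : Odd m) :
    Nat.card {p // PodPair m n p} = Nat.card {s // PodGood m (n + 1) s} := by
  refine Nat.card_eq_of_bijective (fun p => ⟨insert (p.1.2 + 1) p.1.1, p.2.good_succ⟩) ⟨?_, ?_⟩
  · rintro ⟨⟨u, b⟩, h⟩ ⟨⟨v, c⟩, k⟩ e
    have e : insert (b + 1) u = insert (c + 1) v := congrArg Subtype.val e
    have hb : b + 1 ∉ u := h.notMem_succ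
    have hc : c + 1 ∉ v := k.notMem_succ
    have hbc : b = c := by
      have h1 : b + 1 ∈ insert (c + 1) v := e ▸ Finset.mem_insert_self (b + 1) u
      have h2 : c + 1 ∈ insert (b + 1) u := e ▸ Finset.mem_insert_self (c + 1) v
      rw [Finset.mem_insert] at h1 h2
      rcases h1 with h1 | h1
      · omega
      rcases h2 with h2 | h2
      · omega
      have h3 : b + 1 < c := k.2.2.2.2.1 _ h1 h.2.2.2.1.add_one
      have h4 : c + 1 < b := h.2.2.2.2.1 _ h2 k.2.2.2.1.add_one
      omega
    subst hbc
    have huv : u = v := by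
      rw [← Finset.erase_insert hb, e, Finset.erase_insert hc]
    subst huv
    rfl
  · rintro ⟨s, h0, hc, hs, hg⟩
    obtain ⟨b0, hb0, hb0e⟩ := exists_even_of_sum (s := s) (by rw [hs]; exact hn.add_one)
      (by rwa [hc])
    have hne : (s.filter Even).Nonempty := ⟨b0, by simp [hb0, hb0e]⟩
    obtain ⟨b, hb, hmax⟩ := Finset.exists_max_image (s.filter Even) id hne
    rw [Finset.mem_filter] at hb
    obtain ⟨hbs, hbe⟩ := hb
    have hbpos : b ≠ 0 := by rintro rfl; exact h0 hbs
    obtain ⟨c, rfl⟩ := Nat.exists_eq_succ_of_ne_zero hbpos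
    have hco : Odd c := by
      rcases hbe with ⟨k, hk⟩
      exact ⟨k - 1, by omega⟩
    refine ⟨⟨(s.erase (c + 1), c), ?_, ?_, ?_, hco, ?_, ?_⟩, ?_⟩
    · intro h; exact h0 (Finset.mem_of_mem_erase h)
    · rw [← hc]; exact Finset.card_erase_add_one hbs
    · have := Finset.sum_erase_add s (fun i => i) hbs
      simp only [Nat.succ_eq_add_one] at this ⊢
      omega
    · intro a ha hae
      have h1 : a ≤ c + 1 := hmax a (by simp [Finset.mem_of_mem_erase ha, hae])
      have h2 := Finset.ne_of_mem_erase ha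
      rcases hae with ⟨k, hk⟩
      rcases hco with ⟨l, hl⟩
      show a < c
      omega
    · intro a ha hao
      have := hg _ hbs a (Finset.mem_of_mem_erase ha) hbe hao
      show c < a
      omega
    · exact Subtype.ext (Finset.insert_erase hbs)

theorem podEd_odd_parts_eq (m n : ℕ) (hm : 1 ≤ m) (hn : 1 ≤ n) :
    podEd (2 * m - 1) (2 * n) = podEd (2 * m - 1) (2 * n - 1) := by
  have h1 : Odd (2 * n - 1) := ⟨n - 1, by omega⟩
  have h2 : Odd (2 * m - 1) := ⟨m - 1, by omega⟩
  have h3 := card_pair_even _ _ h1 h2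
  rw [show 2 * n - 1 + 1 = 2 * n by omega] at h3
  rw [podEd_eq_card, podEd_eq_card, ← h3, card_pair_odd _ _ h1]
end

section
/- For all integers m ≥ 1 and n ≥ 1, p^{ed}_{od}(m,2n-1) - p^{ed}_{od}(m,2n) = D_o(m,2n-1); equivalently, p^{ed}_{od}(m,2n) + D_o(m,2n-1) = p^{ed}_{od}(m,2n-1). -/
/-- Number of partitions of `n` into exactly `m` distinct parts in which
every odd part is smaller than every even part and at least one odd part occurs. -/
noncomputable def pedOd (m n : ℕ) : ℕ :=
  Nat.card {π : n.Partition // π.parts.Nodup ∧ Multiset.card π.parts = m ∧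
    (∀ a ∈ π.parts, ∀ b ∈ π.parts, Odd a → Even b → a < b) ∧
    (∃ a ∈ π.parts, Odd a)}

open Finset in
theorem card_aux (n : ℕ) (Q : Multiset ℕ → Prop) [DecidablePred Q] :
    Nat.card {π : n.Partition // π.parts.Nodup ∧ Q π.parts} =
    (((range (n+1)).powerset).filter
      (fun s : Finset ℕ => s.sum id = n ∧ 0 ∉ s ∧ Q s.val)).card := by
  rw [← Fintype.card_coe, ← Nat.card_eq_fintype_card]
  refine Nat.card_congr ⟨fun π => ⟨⟨π.1.parts, π.2.1⟩, ?_⟩, fun s => ⟨⟨s.1.val, ?_, ?_⟩, ?_, ?_⟩, ?_, ?_⟩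
  · have hs : (⟨π.1.parts, π.2.1⟩ : Finset ℕ).sum id = n := by
      simpa [Finset.sum] using π.1.parts_sum
    simp only [mem_filter, mem_powerset]
    refine ⟨?_, hs, ?_, π.2.2⟩
    · intro x hx
      have := Finset.single_le_sum (f := id) (fun i _ => Nat.zero_le _) hx
      rw [hs] at this
      simp at this ⊢
      omega
    · intro h0
      exact absurd (π.1.parts_pos h0) (lt_irrefl 0)
  · intro i hi
    have := (mem_filter.1 s.2).2.2.1
    rcases Nat.eq_zero_or_pos i with h | h
    · subst h; exact absurd hi this
    · exact h
  · have := (mem_filter.1 s.2).2.1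
    rw [Finset.sum, Multiset.map_id] at this
    exact this
  · exact s.1.nodup
  · exact (mem_filter.1 s.2).2.2.2
  · intro π; rfl
  · intro s; rfl

/-- replace the largest odd element `a` by `a - 1` -/
noncomputable def lowerOdd (s : Finset ℕ) : Finset ℕ :=
  insert (sSup {x | x ∈ s ∧ Odd x} - 1) (s.erase (sSup {x | x ∈ s ∧ Odd x}))

/-- replace the smallest even element `b` by `b + 1` -/
noncomputable def raiseEven (s : Finset ℕ) : Finset ℕ :=
  insert (sInf {x | x ∈ s ∧ Even x} + 1) (s.erase (sInf {x | x ∈ s ∧ Even x}))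

theorem exists_top (s : Finset ℕ) (h : ∃ a ∈ s, Odd a) :
    ∃ a, IsGreatest {x | x ∈ s ∧ Odd x} a := by
  obtain ⟨a, ha, h1⟩ := h
  have hb : BddAbove {x | x ∈ s ∧ Odd x} := s.bddAbove.mono (fun x hx => hx.1)
  exact ⟨_, Nat.sSup_mem ⟨a, ha, h1⟩ hb, fun x hx => le_csSup hb hx⟩

theorem exists_bot (s : Finset ℕ) (h : ∃ a ∈ s, Even a) :
    ∃ a, IsLeast {x | x ∈ s ∧ Even x} a := by
  obtain ⟨a, ha, h1⟩ := h
  exact ⟨_, Nat.sInf_mem ⟨a, ha, h1⟩, fun x hx => Nat.sInf_le hx⟩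

theorem lowerOdd_eq {s : Finset ℕ} {a : ℕ} (h : IsGreatest {x | x ∈ s ∧ Odd x} a) :
    lowerOdd s = insert (a - 1) (s.erase a) := by
  rw [lowerOdd, h.csSup_eq]

theorem raiseEven_eq {s : Finset ℕ} {a : ℕ} (h : IsLeast {x | x ∈ s ∧ Even x} a) :
    raiseEven s = insert (a + 1) (s.erase a) := by
  rw [raiseEven, h.csInf_eq]

/-- the core conditions -/
def Core (m N : ℕ) (s : Finset ℕ) : Prop :=
  s.sum id = N ∧ 0 ∉ s ∧ s.card = m ∧ (∀ a ∈ s, ∀ b ∈ s, Odd a → Even b → a < b) ∧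
    (∃ a ∈ s, Odd a)

theorem lower_spec {m n : ℕ} (hn : 1 ≤ n) {s : Finset ℕ} (h : Core m (2 * n) s) :
    Core m (2 * n - 1) (lowerOdd s) ∧ (∃ b ∈ lowerOdd s, Even b) ∧
      raiseEven (lowerOdd s) = s := by
  obtain ⟨h1, h2, h3, h4, h5⟩ := h
  obtain ⟨a, ha⟩ := exists_top s h5
  rw [lowerOdd_eq ha]
  obtain ⟨⟨has, hao⟩, hmax⟩ := ha
  have hmax' : ∀ x ∈ s, Odd x → x ≤ a := fun x hx ho => hmax ⟨hx, ho⟩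
  have hsum := Finset.add_sum_erase s id has
  rw [h1] at hsum
  simp only [id] at hsum
  have hex : ∃ c ∈ s.erase a, Odd c := by
    by_contra! hc
    have : 2 ∣ ∑ x ∈ s.erase a, x := Finset.dvd_sum fun i hi => by
      have := hc i hi
      rw [Nat.not_odd_iff_even] at this
      exact this.two_dvd
    obtain ⟨k, hk⟩ := hao
    omega
  obtain ⟨c, hc, hco⟩ := hex
  have hcs := Finset.mem_of_mem_erase hc
  have hca := Finset.ne_of_mem_erase hc
  have hcle := hmax' c hcs hco
  have hc0 : c ≠ 0 := fun h => h2 (h ▸ hcs)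
  have hev : Even (a - 1) := by grind
  have hnot : a - 1 ∉ s := fun hh => by
    have := h4 a has _ hh hao hev
    omega
  have hnot' : a - 1 ∉ s.erase a := fun hh => hnot (Finset.mem_of_mem_erase hh)
  have hleast : IsLeast {x | x ∈ insert (a - 1) (s.erase a) ∧ Even x} (a - 1) := by
    refine ⟨⟨by simp, hev⟩, ?_⟩
    rintro x ⟨hx, hxe⟩
    simp only [Finset.mem_insert, Finset.mem_erase] at hx
    rcases hx with rfl | ⟨_, hx⟩
    · exact le_rfl
    · have := h4 a has x hx hao hxe
      omega
  refine ⟨⟨?_, ?_, ?_, ?_, ?_⟩, ⟨a - 1, by simp, hev⟩, ?_⟩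
  · rw [Finset.sum_insert hnot']
    simp only [id]
    omega
  · simp only [Finset.mem_insert, Finset.mem_erase]
    rintro (h | h)
    · omega
    · exact h2 h.2
  · rw [Finset.card_insert_of_notMem hnot', Finset.card_erase_add_one has, h3]
  · intro x hx y hy hxo hye
    have hy' := hleast.2 ⟨hy, hye⟩
    simp only [Finset.mem_insert, Finset.mem_erase] at hx
    rcases hx with rfl | ⟨hxa, hx⟩
    · grind
    · have := hmax' x hx hxo
      grind
  · exact ⟨c, by simp [hca, hcs], hco⟩
  · rw [raiseEven_eq hleast, Finset.erase_insert hnot']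
    have : a - 1 + 1 = a := by omega
    rw [this, Finset.insert_erase has]

theorem raise_spec {m n : ℕ} (hn : 1 ≤ n) {s : Finset ℕ} (h : Core m (2 * n - 1) s)
    (he : ∃ b ∈ s, Even b) :
    Core m (2 * n) (raiseEven s) ∧ lowerOdd (raiseEven s) = s := by
  obtain ⟨h1, h2, h3, h4, h5⟩ := h
  obtain ⟨a, ha⟩ := exists_bot s he
  rw [raiseEven_eq ha]
  obtain ⟨⟨has, hae⟩, hmin⟩ := ha
  have hmin' : ∀ x ∈ s, Even x → a ≤ x := fun x hx ho => hmin ⟨hx, ho⟩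
  have hsum := Finset.add_sum_erase s id has
  rw [h1] at hsum
  simp only [id] at hsum
  have hod : Odd (a + 1) := hae.add_one
  have hnot : a + 1 ∉ s := fun hh => by
    have := h4 _ hh _ has hod hae
    omega
  have hnot' : a + 1 ∉ s.erase a := fun hh => hnot (Finset.mem_of_mem_erase hh)
  have hgr : IsGreatest {x | x ∈ insert (a + 1) (s.erase a) ∧ Odd x} (a + 1) := by
    refine ⟨⟨by simp, hod⟩, ?_⟩
    rintro x ⟨hx, hxe⟩
    simp only [Finset.mem_insert, Finset.mem_erase] at hx
    rcases hx with rfl | ⟨_, hx⟩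
    · exact le_rfl
    · have := h4 x hx a has hxe hae
      omega
  refine ⟨⟨?_, ?_, ?_, ?_, ?_⟩, ?_⟩
  · rw [Finset.sum_insert hnot']
    simp only [id]
    omega
  · simp only [Finset.mem_insert, Finset.mem_erase]
    rintro (h | h)
    · omega
    · exact h2 h.2
  · rw [Finset.card_insert_of_notMem hnot', Finset.card_erase_add_one has, h3]
  · intro x hx y hy hxo hye
    have hx' := hgr.2 ⟨hx, hxo⟩
    simp only [Finset.mem_insert, Finset.mem_erase] at hy
    rcases hy with rfl | ⟨hya, hy⟩
    · grind
    · have := hmin' y hy hye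
      grind
  · exact ⟨a + 1, by simp, hod⟩
  · rw [lowerOdd_eq hgr, Finset.erase_insert hnot', Nat.add_sub_cancel, Finset.insert_erase has]

theorem core_subset {m N : ℕ} {s : Finset ℕ} (h : Core m N s) :
    s ⊆ Finset.range (N + 1) := by
  intro x hx
  have := Finset.single_le_sum (f := id) (fun i _ => Nat.zero_le _) hx
  rw [h.1] at this
  simp at this ⊢
  omega

theorem pedOd_even_diff (m n : ℕ) (hm : 1 ≤ m) (hn : 1 ≤ n) :
    (pedOd m (2 * n - 1) : ℤ) - (pedOd m (2 * n) : ℤ) = (Dodd m (2 * n - 1) : ℤ) := by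
  classical
  have e1 : ∀ N, pedOd m N =
      ((Finset.range (N+1)).powerset.filter (fun s => Core m N s)).card := fun N => by
    refine (card_aux N (fun p => Multiset.card p = m ∧
      (∀ a ∈ p, ∀ b ∈ p, Odd a → Even b → a < b) ∧ (∃ a ∈ p, Odd a))).trans ?_
    congr 1
    ext s
    rw [Finset.mem_filter, Finset.mem_filter]
    exact Iff.rfl
  have e2 : Dodd m (2 * n - 1) = (((Finset.range (2 * n - 1+1)).powerset.filter
      (fun s => Core m (2 * n - 1) s)).filter (fun s => ¬ ∃ b ∈ s, Even b)).card := by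
    refine (card_aux (2 * n - 1) (fun p => Multiset.card p = m ∧ ∀ a ∈ p, Odd a)).trans ?_
    congr 1
    ext s
    rw [Finset.mem_filter, Finset.mem_filter, Finset.mem_filter]
    simp only [Core, Finset.mem_val, Finset.card_val]
    constructor
    · rintro ⟨h0, h1, h2, h3, h4⟩
      refine ⟨⟨h0, h1, h2, h3, ?_, ?_⟩, ?_⟩
      · intro a _ b hb _ hbe
        exact absurd (h4 b hb) (Nat.not_odd_iff_even.2 hbe)
      · obtain ⟨a, ha⟩ := Finset.card_pos.1 (by omega : 0 < s.card)
        exact ⟨a, ha, h4 a ha⟩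
      · rintro ⟨b, hb, hbe⟩
        exact absurd (h4 b hb) (Nat.not_odd_iff_even.2 hbe)
    · rintro ⟨⟨h0, h1, h2, h3, _, _⟩, h6⟩
      refine ⟨h0, h1, h2, h3, fun a ha => ?_⟩
      by_contra hc
      exact h6 ⟨a, ha, Nat.not_odd_iff_even.1 hc⟩
  have e3 : ((Finset.range (2 * n+1)).powerset.filter (fun s => Core m (2 * n) s)).card =
      (((Finset.range (2 * n - 1+1)).powerset.filter
      (fun s => Core m (2 * n - 1) s)).filter (fun s => ∃ b ∈ s, Even b)).card := by
    refine Finset.card_bij' (fun s _ => lowerOdd s) (fun s _ => raiseEven s) ?_ ?_ ?_ ?_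
    · intro s hs
      have h := lower_spec hn (Finset.mem_filter.1 hs).2
      simp only [Finset.mem_filter, Finset.mem_powerset]
      exact ⟨⟨core_subset h.1, h.1⟩, h.2.1⟩
    · intro s hs
      simp only [Finset.mem_filter, Finset.mem_powerset] at hs ⊢
      have h := raise_spec hn hs.1.2 hs.2
      exact ⟨core_subset h.1, h.1⟩
    · intro s hs
      exact (lower_spec hn (Finset.mem_filter.1 hs).2).2.2
    · intro s hs
      simp only [Finset.mem_filter, Finset.mem_powerset] at hs
      exact (raise_spec hn hs.1.2 hs.2).2
  have e4 := Finset.card_filter_add_card_filter_not (s := (Finset.range (2 * n - 1+1)).powerset.filter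
      (fun s => Core m (2 * n - 1) s)) (fun s => ∃ b ∈ s, Even b)
  rw [e1, e1, e2, e3]
  omega
end

section
/- For all integers m ≥ 1 and n ≥ 1, p^{ed}_{od}(2m,2n) = p^{ed}_{od}(2m,2n-1). -/
/-- The combinatorial conditions, phrased on finite sets. -/
def PedGood (m N : ℕ) (s : Finset ℕ) : Prop :=
  (∀ a ∈ s, 0 < a) ∧ ∑ x ∈ s, x = N ∧ s.card = m ∧
    (∀ a ∈ s, ∀ b ∈ s, Odd a → Even b → a < b) ∧ (∃ a ∈ s, Odd a)

theorem pedOd_eq_card (m N : ℕ) : pedOd m N = Nat.card {s : Finset ℕ // PedGood m N s} := by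
  unfold pedOd
  refine Nat.card_congr
    { toFun := fun π => ⟨⟨π.1.parts, π.2.1⟩, ?_, ?_, π.2.2.1, π.2.2.2.1, π.2.2.2.2⟩
      invFun := fun s => ⟨⟨s.1.val, fun {i} hi => s.2.1 i hi, ?_⟩, s.1.nodup, s.2.2.2.1, s.2.2.2.2.1,
        s.2.2.2.2.2⟩
      left_inv := fun π => rfl
      right_inv := fun s => rfl }
  · intro a ha
    exact π.1.parts_pos ha
  · have := π.1.parts_sum
    simpa [Finset.sum] using this
  · have := s.2.2.1
    rw [Finset.sum, Multiset.map_id'] at this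
    exact this

/-- Lower the largest odd element by one. -/
def pedDown (s : Finset ℕ) : Finset ℕ :=
  insert ((s.filter Odd).sup id - 1) (s.erase ((s.filter Odd).sup id))

/-- Raise the smallest even element by one. -/
noncomputable def pedUp (s : Finset ℕ) : Finset ℕ :=
  insert (sInf {b | b ∈ s ∧ Even b} + 1) (s.erase (sInf {b | b ∈ s ∧ Even b}))

theorem pedDown_eq (s : Finset ℕ) (a : ℕ) (ha : a ∈ s) (ho : Odd a)
    (hmax : ∀ c ∈ s, Odd c → c ≤ a) : pedDown s = insert (a - 1) (s.erase a) := by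
  have : (s.filter Odd).sup id = a := by
    apply le_antisymm
    · apply Finset.sup_le
      intro c hc
      rw [Finset.mem_filter] at hc
      exact hmax c hc.1 hc.2
    · exact Finset.le_sup (f := id) (Finset.mem_filter.2 ⟨ha, ho⟩)
  rw [pedDown, this]

theorem pedUp_eq (s : Finset ℕ) (b : ℕ) (hb : b ∈ s) (he : Even b)
    (hmin : ∀ c ∈ s, Even c → b ≤ c) : pedUp s = insert (b + 1) (s.erase b) := by
  have : sInf {b | b ∈ s ∧ Even b} = b := by
    apply le_antisymm
    · exact Nat.sInf_le ⟨hb, he⟩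
    · exact le_csInf ⟨b, hb, he⟩ (fun c hc => hmin c hc.1 hc.2)
  rw [pedUp, this]

theorem exists_max_odd (s : Finset ℕ) (h : ∃ a ∈ s, Odd a) :
    ∃ a ∈ s, Odd a ∧ ∀ c ∈ s, Odd c → c ≤ a := by
  obtain ⟨a, ha, ho⟩ := h
  obtain ⟨x, hx, hm⟩ := (s.filter Odd).exists_max_image id ⟨a, Finset.mem_filter.2 ⟨ha, ho⟩⟩
  rw [Finset.mem_filter] at hx
  exact ⟨x, hx.1, hx.2, fun c hc hco => hm c (Finset.mem_filter.2 ⟨hc, hco⟩)⟩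

theorem exists_min_even (s : Finset ℕ) (h : ∃ a ∈ s, Even a) :
    ∃ a ∈ s, Even a ∧ ∀ c ∈ s, Even c → a ≤ c := by
  obtain ⟨a, ha, ho⟩ := h
  obtain ⟨x, hx, hm⟩ := (s.filter Even).exists_min_image id ⟨a, Finset.mem_filter.2 ⟨ha, ho⟩⟩
  rw [Finset.mem_filter] at hx
  exact ⟨x, hx.1, hx.2, fun c hc hco => hm c (Finset.mem_filter.2 ⟨hc, hco⟩)⟩

theorem pedDown_spec (m n : ℕ) (s : Finset ℕ) (hs : PedGood (2 * m) (2 * n) s) :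
    PedGood (2 * m) (2 * n - 1) (pedDown s) ∧ pedUp (pedDown s) = s := by
  obtain ⟨hpos, hsum, hcard, hlt, hex⟩ := hs
  obtain ⟨a, ha, ho, hmax⟩ := exists_max_odd s hex
  have hcnt : Even (s.filter Odd).card := by
    have h1 := Finset.even_sum_iff_even_card_odd (s := s) (fun x => x)
    rw [hsum] at h1
    exact h1.1 (even_two_mul n)
  obtain ⟨c, hc, hco, hca⟩ : ∃ c ∈ s, Odd c ∧ c ≠ a := by
    by_contra! hcon
    have : s.filter Odd = {a} := by
      ext x
      simp only [Finset.mem_filter, Finset.mem_singleton]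
      exact ⟨fun h => hcon x h.1 h.2, fun h => h ▸ ⟨ha, ho⟩⟩
    rw [this] at hcnt
    simp at hcnt
  have hcle := hmax c hc hco
  have hcpos := hpos c hc
  have hev : Even (a - 1) := by grind
  have hnot : a - 1 ∉ s := fun h => by
    have := hlt a ha _ h ho hev
    omega
  have hnot' : a - 1 ∉ s.erase a := fun h => hnot (Finset.mem_of_mem_erase h)
  rw [pedDown_eq s a ha ho hmax]
  have hsp := Finset.add_sum_erase s (fun x => x) ha
  have hcd := Finset.card_erase_add_one ha
  refine ⟨⟨?_, ?_, ?_, ?_, ?_⟩, ?_⟩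
  · grind
  · rw [Finset.sum_insert hnot']
    omega
  · rw [Finset.card_insert_of_notMem hnot']
    omega
  · intro x hx y hy hxo hye
    rw [Finset.mem_insert, Finset.mem_erase] at hx hy
    have hx' : x ∈ s ∧ x ≠ a := by
      rcases hx with rfl | hx
      · exact absurd hev (Nat.not_even_iff_odd.2 hxo)
      · exact ⟨hx.2, hx.1⟩
    rcases hy with rfl | hy
    · have := hmax x hx'.1 hxo
      have h2 : x ≠ a - 1 := by
        rintro rfl
        exact hnot hx'.1
      omega
    · exact hlt x hx'.1 y hy.2 hxo hye
  · exact ⟨c, by simp [hc, hca], hco⟩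
  · rw [pedUp_eq _ (a - 1) (Finset.mem_insert_self _ _) hev]
    · rw [Finset.erase_insert hnot', Nat.sub_add_cancel (by omega), Finset.insert_erase ha]
    · intro y hy hye
      rw [Finset.mem_insert, Finset.mem_erase] at hy
      rcases hy with rfl | hy
      · exact le_rfl
      · have := hlt a ha y hy.2 ho hye
        omega

theorem pedUp_spec (m n : ℕ) (hn : 1 ≤ n) (s : Finset ℕ) (hs : PedGood (2 * m) (2 * n - 1) s) :
    PedGood (2 * m) (2 * n) (pedUp s) ∧ pedDown (pedUp s) = s := by
  obtain ⟨hpos, hsum, hcard, hlt, hex⟩ := hs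
  have hcnt : ¬ Even (s.filter Odd).card := by
    have h1 := Finset.even_sum_iff_even_card_odd (s := s) (fun x => x)
    rw [hsum] at h1
    intro h
    have := h1.2 h
    grind
  have hexe : ∃ b ∈ s, Even b := by
    by_contra! hcon
    have : s.filter Odd = s :=
      Finset.filter_true_of_mem fun x hx => Nat.not_even_iff_odd.1 (hcon x hx)
    rw [this, hcard] at hcnt
    exact hcnt (even_two_mul m)
  obtain ⟨b, hb, he, hmin⟩ := exists_min_even s hexe
  obtain ⟨c, hc, hco⟩ := hex
  have hodd : Odd (b + 1) := he.add_one
  have hnot : b + 1 ∉ s := fun h => by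
    have := hlt _ h b hb hodd he
    omega
  have hnot' : b + 1 ∉ s.erase b := fun h => hnot (Finset.mem_of_mem_erase h)
  rw [pedUp_eq s b hb he hmin]
  have hsp := Finset.add_sum_erase s (fun x => x) hb
  have hcd := Finset.card_erase_add_one hb
  refine ⟨⟨?_, ?_, ?_, ?_, ?_⟩, ?_⟩
  · grind
  · rw [Finset.sum_insert hnot']
    omega
  · rw [Finset.card_insert_of_notMem hnot']
    omega
  · intro x hx y hy hxo hye
    rw [Finset.mem_insert, Finset.mem_erase] at hx hy
    have hy' : y ∈ s ∧ y ≠ b := by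
      rcases hy with rfl | hy
      · exact absurd hye (Nat.not_even_iff_odd.2 hodd)
      · exact ⟨hy.2, hy.1⟩
    rcases hx with rfl | hx
    · have := hmin y hy'.1 hye
      have h2 : y ≠ b + 1 := by
        rintro rfl
        exact hnot hy'.1
      omega
    · exact hlt x hx.2 y hy'.1 hxo hye
  · exact ⟨b + 1, Finset.mem_insert_self _ _, hodd⟩
  · rw [pedDown_eq _ (b + 1) (Finset.mem_insert_self _ _) hodd]
    · rw [Finset.erase_insert hnot', Nat.add_sub_cancel, Finset.insert_erase hb]
    · intro y hy hyo
      rw [Finset.mem_insert, Finset.mem_erase] at hy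
      rcases hy with rfl | hy
      · exact le_rfl
      · have := hlt y hy.2 b hb hyo he
        omega

theorem pedOd_even_parts_eq (m n : ℕ) (hm : 1 ≤ m) (hn : 1 ≤ n) :
    pedOd (2 * m) (2 * n) = pedOd (2 * m) (2 * n - 1) := by
  rw [pedOd_eq_card, pedOd_eq_card]
  exact Nat.card_congr
    { toFun := fun s => ⟨pedDown s.1, (pedDown_spec m n s.1 s.2).1⟩
      invFun := fun s => ⟨pedUp s.1, (pedUp_spec m n hn s.1 s.2).1⟩
      left_inv := fun s => Subtype.ext (pedDown_spec m n s.1 s.2).2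
      right_inv := fun s => Subtype.ext (pedUp_spec m n hn s.1 s.2).2 }
end
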